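/- Let x, y be probability vectors of dimension d sorted in nonincreasing order (x_0 ≥ x_1 ≥ … ≥ x_{d−1}, similarly for y), and let c be a probability vector of dimension k with strictly positive entries. If x⊗c ≺ y⊗c, then x_0 ≤ y_0 and x_{d−1} ≥ y_{d−1}. -/

import Mathlib

/-- The sum of the `k` largest entries of a vector (equivalently, for vectors with
nonnegative entries, the maximum of `∑ i ∈ s, x i` over subsets `s` of cardinality at
most `k`; this also accounts for padding with zeros). -/
noncomputable def topSum {ι : Type*} [Fintype ι] [DecidableEq ι] (x : ι → ℝ) (k : ℕ) : ℝ :=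
  ((Finset.univ : Finset ι).powerset.filter (fun s => s.card ≤ k)).sup'
    ⟨∅, by simp⟩ (fun s => ∑ i ∈ s, x i)

/-- A probability vector: nonnegative entries summing to 1. -/
def IsProbVec {ι : Type*} [Fintype ι] (x : ι → ℝ) : Prop :=
  (∀ i, 0 ≤ x i) ∧ ∑ i, x i = 1

/-- `x ≺ y` (majorization, after padding with zeros to a common dimension): every partial
sum of the `k` largest entries of `x` is at most that of `y`, with equal total sums. -/
def PMaj {ι κ : Type*} [Fintype ι] [DecidableEq ι] [Fintype κ] [DecidableEq κ]
    (x : ι → ℝ) (y : κ → ℝ) : Prop :=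
  (∀ k : ℕ, topSum x k ≤ topSum y k) ∧ (∑ i, x i = ∑ j, y j)

/-- Tensor product of two vectors: `(x ⊗ y)_{(i,j)} = x_i y_j`. -/
def pvTensor {ι κ : Type*} (x : ι → ℝ) (y : κ → ℝ) : ι × κ → ℝ :=
  fun p => x p.1 * y p.2

theorem sum_le_topSum {ι : Type*} [Fintype ι] [DecidableEq ι] (x : ι → ℝ) {k : ℕ}
    {s : Finset ι} (hs : s.card ≤ k) : ∑ i ∈ s, x i ≤ topSum x k :=
  Finset.le_sup' (fun s => ∑ i ∈ s, x i) (by simpa using hs)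

theorem topSum_le {ι : Type*} [Fintype ι] [DecidableEq ι] {x : ι → ℝ} {k : ℕ} {a : ℝ}
    (h : ∀ s : Finset ι, s.card ≤ k → ∑ i ∈ s, x i ≤ a) : topSum x k ≤ a :=
  Finset.sup'_le _ _ fun s hs => h s (by simpa using hs)

theorem topSum_one_le {ι : Type*} [Fintype ι] [DecidableEq ι] {x : ι → ℝ} {a : ℝ}
    (ha : 0 ≤ a) (h : ∀ i, x i ≤ a) : topSum x 1 ≤ a := by
  refine topSum_le fun s hs => ?_
  rcases Nat.le_one_iff_eq_zero_or_eq_one.mp hs with h0 | h1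
  · simpa [Finset.card_eq_zero.mp h0] using ha
  · obtain ⟨i, rfl⟩ := Finset.card_eq_one.mp h1
    simpa using h i

/-- Dropping at least one entry loses at least any lower bound on the entries. -/
theorem topSum_card_sub_one_le {ι : Type*} [Fintype ι] [DecidableEq ι] [Nonempty ι]
    {x : ι → ℝ} {a : ℝ} (hx : ∀ i, 0 ≤ x i) (h : ∀ i, a ≤ x i) :
    topSum x (Fintype.card ι - 1) ≤ ∑ i, x i - a := by
  refine topSum_le fun s hs => ?_
  have hcard : s.card < Fintype.card ι := by
    have := Fintype.card_pos (α := ι)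
    omega
  obtain ⟨i, hi⟩ : ∃ i, i ∉ s := by
    by_contra! hall
    rw [Finset.eq_univ_of_forall hall, Finset.card_univ] at hcard
    exact hcard.false
  have hle : ∑ j ∈ insert i s, x j ≤ ∑ j, x j :=
    Finset.sum_le_univ_sum_of_nonneg hx
  rw [Finset.sum_insert hi] at hle
  linarith [h i]

theorem le_topSum_card_sub_one {ι : Type*} [Fintype ι] [DecidableEq ι] (x : ι → ℝ) (i : ι) :
    ∑ j, x j - x i ≤ topSum x (Fintype.card ι - 1) := by
  have hle := sum_le_topSum x (s := Finset.univ.erase i) (k := Fintype.card ι - 1)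
    (by rw [Finset.card_erase_of_mem (Finset.mem_univ i), Finset.card_univ])
  linarith [Finset.add_sum_erase Finset.univ x (Finset.mem_univ i)]

/-- Jonathan–Plenio necessary condition on extreme Schmidt coefficients: if
`x ⊗ c ≺ y ⊗ c` for a strictly positive catalyst `c`, then `x₀ ≤ y₀` and
`x_{d-1} ≥ y_{d-1}` (for `x, y` sorted nonincreasingly). -/
theorem catalytic_extreme_coefficients {d k : ℕ} (hd : 0 < d) (x y : Fin d → ℝ)
    (c : Fin k → ℝ)
    (hx : IsProbVec x) (hy : IsProbVec y) (hxa : Antitone x) (hya : Antitone y)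
    (hc : IsProbVec c) (hcp : ∀ j, 0 < c j)
    (h : PMaj (pvTensor x c) (pvTensor y c)) :
    x ⟨0, hd⟩ ≤ y ⟨0, hd⟩ ∧
      y ⟨d - 1, Nat.sub_lt hd Nat.one_pos⟩ ≤ x ⟨d - 1, Nat.sub_lt hd Nat.one_pos⟩ := by
  have : Nonempty (Fin d) := ⟨⟨0, hd⟩⟩
  have : Nonempty (Fin k) := by
    by_contra hempty
    rw [not_nonempty_iff] at hempty
    simpa using hc.2
  obtain ⟨jmax, hjmax⟩ := Finite.exists_max c
  obtain ⟨jmin, hjmin⟩ := Finite.exists_min c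
  obtain ⟨hmaj, hsum⟩ := h
  constructor
  · refine le_of_mul_le_mul_right ?_ (hcp jmax)
    calc x ⟨0, hd⟩ * c jmax
        = ∑ p ∈ {(⟨0, hd⟩, jmax)}, pvTensor x c p := by simp [pvTensor]
      _ ≤ topSum (pvTensor x c) 1 := sum_le_topSum _ (by simp)
      _ ≤ topSum (pvTensor y c) 1 := hmaj 1
      _ ≤ y ⟨0, hd⟩ * c jmax :=
        topSum_one_le (mul_nonneg (hy.1 _) (hcp _).le) fun p =>
          mul_le_mul (hya (Fin.mk_le_of_le_val (Nat.zero_le _))) (hjmax _) (hcp _).le (hy.1 _)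
  · refine le_of_mul_le_mul_right ?_ (hcp jmin)
    have hlower := le_topSum_card_sub_one (pvTensor x c)
      (⟨d - 1, Nat.sub_lt hd Nat.one_pos⟩, jmin)
    have hupper := topSum_card_sub_one_le (x := pvTensor y c)
      (a := y ⟨d - 1, Nat.sub_lt hd Nat.one_pos⟩ * c jmin)
      (fun p => mul_nonneg (hy.1 _) (hcp _).le)
      (fun p => mul_le_mul (hya (Fin.le_def.mpr (Nat.le_sub_one_of_lt p.1.isLt)))
        (hjmin _) (hcp _).le (hy.1 _))
    have hmid := hmaj (Fintype.card (Fin d × Fin k) - 1)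
    simp only [pvTensor] at hlower hupper hmid hsum
    linarith
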